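/- Assume H_i(x,p) = F_i(x,p) − f_i(x) with F_i, f_i satisfying (A1)–(A5). Then the ergodic constant of (E) equals 0; that is, there exists a pair (v₁, v₂) of continuous functions on 𝕋^n that is a viscosity solution of the stationary system F₁(x, Dv₁) + v₁ − v₂ = f₁(x), F₂(x, Dv₂) + v₂ − v₁ = f₂(x) in 𝕋^n, and 0 is the unique constant c for which (E) admits a viscosity solution. -/

import Mathlib

open MeasureTheory Filter Topology Set

noncomputable section

/-- Euclidean space `ℝ^n`; the torus `𝕋^n` is modelled by `ℤ^n`-periodic functions on it. -/
abbrev En (n : ℕ) : Type := EuclideanSpace ℝ (Fin n)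

/-- The integer vector `k ∈ ℤ^n` viewed as an element of `ℝ^n`. -/
def intVec (n : ℕ) (k : Fin n → ℤ) : En n := WithLp.toLp 2 (fun i => (k i : ℝ))

/-- A `ℤ^n`-periodic function on `ℝ^n`, i.e. a function on the torus `𝕋^n`. -/
def ZPeriodic {n : ℕ} (f : En n → ℝ) : Prop :=
  ∀ (x : En n) (k : Fin n → ℤ), f (x + intVec n k) = f x

/-- A Hamiltonian `H : 𝕋^n × ℝ^n → ℝ` (periodic in the first variable). -/
def ZPeriodicH {n : ℕ} (H : En n → En n → ℝ) : Prop :=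
  ∀ (x : En n) (k : Fin n → ℤ) (p : En n), H (x + intVec n k) p = H x p

/-- A function on `𝕋^n × ℝ` (space-time, periodic in space). -/
def ZPeriodicST {n : ℕ} (u : En n × ℝ → ℝ) : Prop :=
  ∀ (x : En n) (k : Fin n → ℤ) (t : ℝ), u (x + intVec n k, t) = u (x, t)

/-- (A1): coercivity, `lim_{r→∞} inf{H(x,p) : x ∈ 𝕋^n, |p| ≥ r} = ∞`. -/
def Coercive {n : ℕ} (H : En n → En n → ℝ) : Prop :=
  ∀ M : ℝ, ∃ r : ℝ, ∀ (x p : En n), r ≤ ‖p‖ → M ≤ H x p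

/-- Coercivity for an `x`-independent Hamiltonian. -/
def CoerciveP {n : ℕ} (H : En n → ℝ) : Prop :=
  ∀ M : ℝ, ∃ r : ℝ, ∀ p : En n, r ≤ ‖p‖ → M ≤ H p

/-- Lipschitz continuity (membership in `W^{1,∞}`). -/
def IsLip {n : ℕ} (f : En n → ℝ) : Prop := ∃ K : NNReal, LipschitzWith K f

/-- Viscosity subsolution inequality for one stationary equation
`H(x, Dw) + c (w - wo) ≤ ρ(x)` of a weakly coupled system. -/
def StatSubIneq {n : ℕ} (H : En n → En n → ℝ) (c : ℝ) (w wo : En n → ℝ) (ρ : En n → ℝ) : Prop :=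
  ∀ φ : En n → ℝ, ContDiff ℝ 1 φ →
    ∀ x₀ : En n, IsLocalMax (fun x => w x - φ x) x₀ →
      H x₀ (gradient φ x₀) + c * (w x₀ - wo x₀) ≤ ρ x₀

/-- Viscosity supersolution inequality for one stationary equation. -/
def StatSuperIneq {n : ℕ} (H : En n → En n → ℝ) (c : ℝ) (w wo : En n → ℝ) (ρ : En n → ℝ) : Prop :=
  ∀ φ : En n → ℝ, ContDiff ℝ 1 φ →
    ∀ x₀ : En n, IsLocalMin (fun x => w x - φ x) x₀ →
      ρ x₀ ≤ H x₀ (gradient φ x₀) + c * (w x₀ - wo x₀)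

/-- Viscosity subsolution of the stationary system
`Hᵢ(x, Dwᵢ) + cᵢ (wᵢ - wⱼ) = ρᵢ(x)`, `i = 1,2`. -/
def CellSub {n : ℕ} (H₁ H₂ : En n → En n → ℝ) (c₁ c₂ : ℝ) (w₁ w₂ : En n → ℝ)
    (ρ₁ ρ₂ : En n → ℝ) : Prop :=
  StatSubIneq H₁ c₁ w₁ w₂ ρ₁ ∧ StatSubIneq H₂ c₂ w₂ w₁ ρ₂

/-- Viscosity supersolution of the stationary system. -/
def CellSuper {n : ℕ} (H₁ H₂ : En n → En n → ℝ) (c₁ c₂ : ℝ) (w₁ w₂ : En n → ℝ)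
    (ρ₁ ρ₂ : En n → ℝ) : Prop :=
  StatSuperIneq H₁ c₁ w₁ w₂ ρ₁ ∧ StatSuperIneq H₂ c₂ w₂ w₁ ρ₂

/-- Viscosity solution (continuous, sub- and supersolution) of the stationary system. -/
def CellSolution {n : ℕ} (H₁ H₂ : En n → En n → ℝ) (c₁ c₂ : ℝ) (v₁ v₂ : En n → ℝ)
    (ρ₁ ρ₂ : En n → ℝ) : Prop :=
  Continuous v₁ ∧ Continuous v₂ ∧
    CellSub H₁ H₂ c₁ c₂ v₁ v₂ ρ₁ ρ₂ ∧ CellSuper H₁ H₂ c₁ c₂ v₁ v₂ ρ₁ ρ₂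

/-- Subsolution of the ergodic problem (E) with constant `c` (coupling constants 1). -/
def ErgSub {n : ℕ} (H₁ H₂ : En n → En n → ℝ) (v₁ v₂ : En n → ℝ) (c : ℝ) : Prop :=
  CellSub H₁ H₂ 1 1 v₁ v₂ (fun _ => c) (fun _ => c)

/-- Supersolution of the ergodic problem (E). -/
def ErgSuper {n : ℕ} (H₁ H₂ : En n → En n → ℝ) (v₁ v₂ : En n → ℝ) (c : ℝ) : Prop :=
  CellSuper H₁ H₂ 1 1 v₁ v₂ (fun _ => c) (fun _ => c)

/-- Viscosity solution of the ergodic problem (E):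
`H₁(x,Dv₁) + v₁ - v₂ = c`, `H₂(x,Dv₂) + v₂ - v₁ = c` on `𝕋^n`. -/
def ErgSolution {n : ℕ} (H₁ H₂ : En n → En n → ℝ) (v₁ v₂ : En n → ℝ) (c : ℝ) : Prop :=
  CellSolution H₁ H₂ 1 1 v₁ v₂ (fun _ => c) (fun _ => c)

/-- Viscosity subsolution inequality for one evolution equation
`∂ₜ u + H(x, Du) + u - uo ≤ 0` in `𝕋^n × (0,∞)`. -/
def EvolSubIneq {n : ℕ} (H : En n → En n → ℝ) (u uo : En n × ℝ → ℝ) : Prop :=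
  ∀ φ : En n × ℝ → ℝ, ContDiff ℝ 1 φ →
    ∀ (x₀ : En n) (t₀ : ℝ), 0 < t₀ →
      IsLocalMax (fun q => u q - φ q) (x₀, t₀) →
      fderiv ℝ φ (x₀, t₀) (0, 1) + H x₀ (gradient (fun y => φ (y, t₀)) x₀)
        + u (x₀, t₀) - uo (x₀, t₀) ≤ 0

/-- Viscosity supersolution inequality for one evolution equation. -/
def EvolSuperIneq {n : ℕ} (H : En n → En n → ℝ) (u uo : En n × ℝ → ℝ) : Prop :=
  ∀ φ : En n × ℝ → ℝ, ContDiff ℝ 1 φ →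
    ∀ (x₀ : En n) (t₀ : ℝ), 0 < t₀ →
      IsLocalMin (fun q => u q - φ q) (x₀, t₀) →
      0 ≤ fderiv ℝ φ (x₀, t₀) (0, 1) + H x₀ (gradient (fun y => φ (y, t₀)) x₀)
        + u (x₀, t₀) - uo (x₀, t₀)

/-- Viscosity subsolution of system (C) (with coupling constants `c₁ = c₂ = 1`). -/
def SysSub {n : ℕ} (H₁ H₂ : En n → En n → ℝ) (u₁ u₂ : En n × ℝ → ℝ) : Prop :=
  EvolSubIneq H₁ u₁ u₂ ∧ EvolSubIneq H₂ u₂ u₁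

/-- Viscosity supersolution of system (C). -/
def SysSuper {n : ℕ} (H₁ H₂ : En n → En n → ℝ) (u₁ u₂ : En n × ℝ → ℝ) : Prop :=
  EvolSuperIneq H₁ u₁ u₂ ∧ EvolSuperIneq H₂ u₂ u₁

/-- Viscosity solution of the Cauchy problem (C): continuous on `𝕋^n × [0,∞)`,
sub- and supersolution, attaining the initial data. -/
def SysSolution {n : ℕ} (H₁ H₂ : En n → En n → ℝ) (u₀₁ u₀₂ : En n → ℝ)
    (u₁ u₂ : En n × ℝ → ℝ) : Prop :=
  ContinuousOn u₁ {q : En n × ℝ | 0 ≤ q.2} ∧ ContinuousOn u₂ {q : En n × ℝ | 0 ≤ q.2} ∧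
    SysSub H₁ H₂ u₁ u₂ ∧ SysSuper H₁ H₂ u₁ u₂ ∧
    (∀ x, u₁ (x, 0) = u₀₁ x) ∧ (∀ x, u₂ (x, 0) = u₀₂ x)

/-- Viscosity subsolution of the single stationary equation `H(x,Dv) ≤ c` on `𝕋^n`. -/
def SingleSub {n : ℕ} (H : En n → En n → ℝ) (v : En n → ℝ) (c : ℝ) : Prop :=
  ∀ φ : En n → ℝ, ContDiff ℝ 1 φ →
    ∀ x₀ : En n, IsLocalMax (fun x => v x - φ x) x₀ → H x₀ (gradient φ x₀) ≤ c

/-- Viscosity supersolution of the single stationary equation `H(x,Dv) ≥ c` on `𝕋^n`. -/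
def SingleSuper {n : ℕ} (H : En n → En n → ℝ) (v : En n → ℝ) (c : ℝ) : Prop :=
  ∀ φ : En n → ℝ, ContDiff ℝ 1 φ →
    ∀ x₀ : En n, IsLocalMin (fun x => v x - φ x) x₀ → c ≤ H x₀ (gradient φ x₀)

/-- Viscosity solution of the single stationary equation `H(x,Dv) = c` on `𝕋^n`. -/
def SingleSolution {n : ℕ} (H : En n → En n → ℝ) (v : En n → ℝ) (c : ℝ) : Prop :=
  Continuous v ∧ SingleSub H v c ∧ SingleSuper H v c

/-- Uniform convergence `u(·,t) → v` on `𝕋^n` as `t → ∞`. -/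
def UnifTendsTo {n : ℕ} (u : En n × ℝ → ℝ) (v : En n → ℝ) : Prop :=
  ∀ ε : ℝ, 0 < ε → ∃ T : ℝ, ∀ t : ℝ, T ≤ t → ∀ x : En n, |u (x, t) - v x| ≤ ε

/-- (A8)⁺ at level `η` with constant `ψ`. -/
def A8plusAt {n : ℕ} (H : En n → En n → ℝ) (η ψ : ℝ) : Prop :=
  ∀ (x p q : En n), η ≤ H x (p + q) → H x q ≤ 0 →
    ∀ μ : ℝ, 0 < μ → μ ≤ 1 → H x (p + q) + ψ * (1 - μ) ≤ μ * H x (μ⁻¹ • p + q)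

/-- (A8)⁻ at level `η` with constant `ψ`. -/
def A8minusAt {n : ℕ} (H : En n → En n → ℝ) (η ψ : ℝ) : Prop :=
  ∀ (x p q : En n), H x (p + q) ≤ -η → 0 ≤ H x q →
    ∀ μ : ℝ, 1 ≤ μ → μ * H x (μ⁻¹ • p + q) ≤ H x (p + q) - ψ * (μ - 1) / μ

/-- (A8)⁺ with threshold `η₀`. -/
def A8plus {n : ℕ} (H : En n → En n → ℝ) (η₀ : ℝ) : Prop :=
  ∀ η : ℝ, 0 < η → η ≤ η₀ → ∃ ψ : ℝ, 0 < ψ ∧ A8plusAt H η ψ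

/-- (A8)⁻ with threshold `η₀`. -/
def A8minus {n : ℕ} (H : En n → En n → ℝ) (η₀ : ℝ) : Prop :=
  ∀ η : ℝ, 0 < η → η ≤ η₀ → ∃ ψ : ℝ, 0 < ψ ∧ A8minusAt H η ψ

/-- The function `F` of the Key Lemma: `F(r) = C r` for `r ≥ 0`, `F(r) = r / C` for `r < 0`. -/
def Fc (C r : ℝ) : ℝ := if 0 ≤ r then C * r else r / C

/-- `α_η⁺(s)` (resp. `β_η⁺(s)` with `u = u₂`):
`min_{x ∈ 𝕋^n, t ≥ s} (u(x,t) - v(x) + η (t-s)) / (u(x,s) - v(x))`. -/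
def alphaPlus {n : ℕ} (u : En n × ℝ → ℝ) (v : En n → ℝ) (η s : ℝ) : ℝ :=
  sInf {r : ℝ | ∃ (x : En n) (t : ℝ), s ≤ t ∧
    r = (u (x, t) - v x + η * (t - s)) / (u (x, s) - v x)}

/-- `α_η⁻(s)` (resp. `β_η⁻(s)` with `u = u₂`):
`max_{x ∈ 𝕋^n, t ≥ s} (u(x,t) - v(x) - η (t-s)) / (u(x,s) - v(x))`. -/
def alphaMinus {n : ℕ} (u : En n × ℝ → ℝ) (v : En n → ℝ) (η s : ℝ) : ℝ :=
  sSup {r : ℝ | ∃ (x : En n) (t : ℝ), s ≤ t ∧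
    r = (u (x, t) - v x - η * (t - s)) / (u (x, s) - v x)}

/-- (A9)⁺. -/
def A9plus {n : ℕ} (H : En n → En n → ℝ) : Prop :=
  ∃ K : Set (En n), IsClosed K ∧ (∀ x ∈ K, ∀ k : Fin n → ℤ, x + intVec n k ∈ K) ∧
    (∀ x ∈ K, (∀ p : En n, 0 ≤ H x p) ∧ ∃ p : En n, H x p = 0) ∧
    (∀ ε : ℝ, 0 < ε → ∃ η₀ : ℝ, 0 < η₀ ∧ ∃ ψ : ℝ → ℝ, (∀ r : ℝ, 0 < r → 0 < ψ r) ∧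
      ∀ η : ℝ, 0 < η → η ≤ η₀ → ∀ (x p q : En n), ε ≤ Metric.infDist x K →
        η ≤ H x (p + q) → H x q ≤ 0 →
        ∀ μ : ℝ, 0 < μ → μ ≤ 1 → H x (p + q) + ψ η * (1 - μ) ≤ μ * H x (μ⁻¹ • p + q))

/-- (A9)⁻. -/
def A9minus {n : ℕ} (H : En n → En n → ℝ) : Prop :=
  ∃ K : Set (En n), IsClosed K ∧ (∀ x ∈ K, ∀ k : Fin n → ℤ, x + intVec n k ∈ K) ∧
    (∀ x ∈ K, (∀ p : En n, 0 ≤ H x p) ∧ ∃ p : En n, H x p = 0) ∧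
    (∀ ε : ℝ, 0 < ε → ∃ η₀ : ℝ, 0 < η₀ ∧ ∃ ψ : ℝ → ℝ, (∀ r : ℝ, 0 < r → 0 < ψ r) ∧
      ∀ η : ℝ, 0 < η → η ≤ η₀ → ∀ (x p q : En n), ε ≤ Metric.infDist x K →
        H x (p + q) ≤ -η → 0 ≤ H x q →
        ∀ μ : ℝ, 1 ≤ μ → μ * H x (μ⁻¹ • p + q) ≤ H x (p + q) - ψ η * (μ - 1) / μ)

/-- (A6): uniform convexity of an `x`-independent Hamiltonian. -/
def UnifConvex {n : ℕ} (H : En n → ℝ) : Prop :=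
  ∃ α : ℝ, 0 < α ∧ ∀ᵐ q : En n ∂volume, DifferentiableAt ℝ H q ∧
    ∀ p : En n, H q + fderiv ℝ H q (p - q) + α * ‖p - q‖ ^ 2 ≤ H p

end

/-!
Perron's method on the whole space `ℝⁿ`. Nonnegativity of `Fᵢ` bounds the coupling terms of a
subsolution, `cᵢ (wᵢ - wⱼ) ≤ fᵢ`, so `F₁(x, Dw₁) ≤ f₁ + (c₁ / c₂) f₂`, and coercivity turns this
into a Lipschitz constant common to all subsolutions. Among the subsolutions with that Lipschitz
constant that are nonpositive on `𝒜 = {f₁ = f₂ = 0}` there is a greatest one; it dominates `0`,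
hence vanishes on `𝒜`, and it is periodic because its translates are competitors. It is a
supersolution: on `𝒜` because `Fᵢ ≥ 0`, and off `𝒜` because otherwise a small bump supported away
from `𝒜` would produce a larger competitor.

A solution with ergodic constant `c` has `c ≤ 0` by testing with a constant at the smaller of the
two minima, and `0 ≤ c` by adding the two bounds on the coupling terms at a point of `𝒜`.
-/

section Gradient

variable {E : Type*} [NormedAddCommGroup E] [InnerProductSpace ℝ E]

lemma contDiff_mul_norm_sub_sq (K : ℝ) (a : E) :
    ContDiff ℝ 1 fun y : E => K * ‖y - a‖ ^ 2 :=
  contDiff_const.mul ((contDiff_id.sub contDiff_const).norm_sq ℝ)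

variable [CompleteSpace E]

lemma continuous_gradient_of_contDiff {φ : E → ℝ} (hφ : ContDiff ℝ 1 φ) :
    Continuous (gradient φ) :=
  (InnerProductSpace.toDual ℝ E).symm.continuous.comp (hφ.continuous_fderiv one_ne_zero)

lemma hasGradientAt_mul_norm_sub_sq (K : ℝ) (a x : E) :
    HasGradientAt (fun y : E => K * ‖y - a‖ ^ 2) ((2 * K) • (x - a)) x := by
  have hsub : HasFDerivAt (fun y : E => y - a) (ContinuousLinearMap.id ℝ E) x :=
    (hasFDerivAt_id x).sub_const a
  refine hasGradientAt_iff_hasFDerivAt.mpr ((hsub.norm_sq.const_mul K).congr_fderiv ?_)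
  ext v
  simp only [map_sub, ContinuousLinearMap.comp_id, smul_apply, sub_apply, coe_innerSL_apply,
    nsmul_eq_mul, Nat.cast_ofNat, smul_eq_mul, map_smul, InnerProductSpace.toDual_apply_apply]
  ring

lemma gradient_add_mul_norm_sub_sq_add_const_self {φ : E → ℝ} {a : E}
    (hφ : DifferentiableAt ℝ φ a) (K C : ℝ) :
    gradient (fun y => φ y + K * ‖y - a‖ ^ 2 + C) a = gradient φ a := by
  have hquad : HasFDerivAt (fun y : E => K * ‖y - a‖ ^ 2) (0 : E →L[ℝ] ℝ) a := by
    simpa using (hasGradientAt_mul_norm_sub_sq K a a).hasFDerivAt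
  have hsum : HasFDerivAt (fun y => φ y + K * ‖y - a‖ ^ 2 + C) (fderiv ℝ φ a) a := by
    simpa only [add_zero] using (hφ.hasFDerivAt.fun_add hquad).add_const C
  exact congrArg (InnerProductSpace.toDual ℝ E).symm hsum.fderiv

lemma gradient_eq_of_isLocalMax_sub {φ ψ : E → ℝ} {x : E} (hφ : DifferentiableAt ℝ φ x)
    (hψ : DifferentiableAt ℝ ψ x) (hmax : IsLocalMax (fun y => φ y - ψ y) x) :
    gradient φ x = gradient ψ x := by
  have hzero : fderiv ℝ φ x - fderiv ℝ ψ x = 0 :=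
    (fderiv_fun_sub hφ hψ).symm.trans hmax.fderiv_eq_zero
  exact congrArg (InnerProductSpace.toDual ℝ E).symm (sub_eq_zero.mp hzero)

end Gradient

section TestFunctions

lemma exists_forall_sub_mul_norm_le {E : Type*} [SeminormedAddCommGroup E] [ProperSpace E]
    {w : E → ℝ} {L a C : ℝ} (hw : Continuous w) (hL : 0 ≤ L) (hLa : L < a)
    (hgrowth : ∀ y, w y ≤ C + L * ‖y‖) (x : E) :
    ∃ m, ∀ y, w y - a * ‖y - x‖ ≤ w m - a * ‖m - x‖ := by
  refine Continuous.exists_forall_ge' (f := fun y => w y - a * ‖y - x‖) (by fun_prop) x ?_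
  filter_upwards [(tendsto_dist_right_cocompact_atTop x).eventually_ge_atTop
    ((C + L * ‖x‖ - w x) / (a - L))] with y hy
  rw [div_le_iff₀ (sub_pos.mpr hLa), dist_eq_norm] at hy
  have htriangle : L * ‖y‖ ≤ L * (‖y - x‖ + ‖x‖) := by gcongr; exact norm_le_norm_sub_add y x
  rw [sub_self, norm_zero]
  linarith [hgrowth y]

variable {E : Type*} [NormedAddCommGroup E] [InnerProductSpace ℝ E] [ProperSpace E]

-- The steep paraboloid `K ‖· - x‖²` beats `w` on the boundary of a small ball around `x`.
lemma frequently_exists_contDiff_isLocalMax_sub {w : E → ℝ} (hw : Continuous w) (x : E) :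
    ∃ᶠ m in 𝓝 x, ∃ φ : E → ℝ, ContDiff ℝ 1 φ ∧ IsLocalMax (fun y => w y - φ y) m := by
  refine Metric.nhds_basis_closedBall.frequently_iff.mpr fun r hr => ?_
  obtain ⟨b, -, hb⟩ := (isCompact_closedBall x r).exists_isMaxOn
    ⟨x, Metric.mem_closedBall_self hr.le⟩ hw.continuousOn
  set K : ℝ := (w b - w x + 1) / r ^ 2
  have hK : K * r ^ 2 = w b - w x + 1 := div_mul_cancel₀ _ (by positivity)
  have hboundary : ∀ y ∈ Metric.closedBall x r \ Metric.ball x r,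
      w y - K * ‖y - x‖ ^ 2 < w x - K * ‖x - x‖ ^ 2 := by
    intro y hy
    rw [Metric.closedBall_sdiff_ball] at hy
    have hyb : w y ≤ w b := hb (Metric.sphere_subset_closedBall hy)
    rw [mem_sphere_iff_norm.mp hy, hK, sub_self, norm_zero]
    linarith
  obtain ⟨m, hm, hmax⟩ := (isCompact_closedBall x r).exists_isLocalMax_mem_open
    Metric.ball_subset_closedBall (f := fun y => w y - K * ‖y - x‖ ^ 2) (by fun_prop)
    (Metric.mem_closedBall_self hr.le) hboundary Metric.isOpen_ball
  exact ⟨m, Metric.ball_subset_closedBall hm, _, contDiff_mul_norm_sub_sq K x, hmax⟩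

-- The cone `a ‖· - x‖` is touched from above at `m` by the paraboloid
-- `a (‖· - x‖² / d + d) / 2`, `d = ‖m - x‖`, which unlike the cone is smooth everywhere.
lemma exists_contDiff_isLocalMax_sub_norm_gradient_eq {w : E → ℝ} {a : ℝ} (ha : 0 ≤ a) {x m : E}
    (hmx : m ≠ x) (hmax : IsLocalMax (fun y => w y - a * ‖y - x‖) m) :
    ∃ φ : E → ℝ, ContDiff ℝ 1 φ ∧ IsLocalMax (fun y => w y - φ y) m ∧ ‖gradient φ m‖ = a := by
  set d := ‖m - x‖
  have hd : 0 < d := norm_pos_iff.mpr (sub_ne_zero.mpr hmx)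
  refine ⟨fun y => a / (2 * d) * ‖y - x‖ ^ 2, contDiff_mul_norm_sub_sq _ _, ?_, ?_⟩
  · filter_upwards [hmax] with y hy
    have hgap : a / (2 * d) * ‖y - x‖ ^ 2 - a * ‖y - x‖ + a * d / 2
        = a / (2 * d) * (‖y - x‖ - d) ^ 2 := by field_simp; ring
    have hgap_nonneg : 0 ≤ a / (2 * d) * (‖y - x‖ - d) ^ 2 := by positivity
    have htouch : a / (2 * d) * d ^ 2 = a * d / 2 := by field_simp
    change w y - a * ‖y - x‖ ≤ w m - a * d at hy
    change w y - a / (2 * d) * ‖y - x‖ ^ 2 ≤ w m - a / (2 * d) * d ^ 2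
    linarith
  · rw [(hasGradientAt_mul_norm_sub_sq _ x m).gradient, norm_smul,
      Real.norm_of_nonneg (by positivity)]
    change 2 * (a / (2 * d)) * d = a
    field_simp

lemma lipschitzWith_of_norm_gradient_le {w : E → ℝ} {L : NNReal} {C : ℝ} (hw : Continuous w)
    (hgrowth : ∀ y, w y ≤ C + L * ‖y‖)
    (hgrad : ∀ φ : E → ℝ, ContDiff ℝ 1 φ → ∀ x, IsLocalMax (fun y => w y - φ y) x →
      ‖gradient φ x‖ ≤ L) :
    LipschitzWith L w := by
  have hslope : ∀ a : ℝ, L < a → ∀ x y, w x ≤ w y + a * dist x y := by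
    intro a hLa x y
    obtain ⟨m, hm⟩ := exists_forall_sub_mul_norm_le hw L.coe_nonneg hLa hgrowth y
    have hmy : m = y := by
      by_contra hne
      obtain ⟨φ, hφ, hmax, hnorm⟩ := exists_contDiff_isLocalMax_sub_norm_gradient_eq
        (L.coe_nonneg.trans hLa.le) hne (Eventually.of_forall hm)
      exact absurd (hgrad φ hφ m hmax) (by rw [hnorm]; exact hLa.not_ge)
    have hx := hm x
    rw [hmy, sub_self, norm_zero, mul_zero, sub_zero] at hx
    rw [dist_eq_norm]
    linarith
  refine LipschitzWith.of_le_add_mul L fun x y => ?_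
  have hlim : Tendsto (fun a : ℝ => w y + a * dist x y) (𝓝[>] (L : ℝ))
      (𝓝 (w y + L * dist x y)) :=
    Continuous.tendsto' (by fun_prop) _ _ rfl |>.mono_left nhdsWithin_le_nhds
  exact ge_of_tendsto hlim (eventually_mem_nhdsWithin.mono fun a ha => hslope a ha x y)

end TestFunctions

lemma exists_closedBall_forall_of_eventually {X : Type*} [PseudoMetricSpace X] {x : X}
    {P : X × ℝ → Prop} {Q : X → Prop} (hP : ∀ᶠ q in 𝓝 (x, (0 : ℝ)), P q)
    (hQ : ∀ᶠ y in 𝓝 x, Q y) :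
    ∃ r > 0, ∃ δ > 0, δ ≤ r ^ 2 ∧ ∀ y ∈ Metric.closedBall x r, P (y, δ) ∧ Q y := by
  obtain ⟨r, hr, hball⟩ :=
    Metric.nhds_basis_closedBall.eventually_iff.mp (hP.and (continuous_fst.tendsto (x, 0) hQ))
  have hδ : 0 < min r (r ^ 2) := by positivity
  refine ⟨r, hr, min r (r ^ 2), hδ, min_le_right _ _, fun y hy => hball ?_⟩
  rw [← closedBall_prod_same]
  refine ⟨hy, ?_⟩
  rw [mem_closedBall_zero_iff, Real.norm_of_nonneg hδ.le]
  exact min_le_left _ _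

lemma lipschitzWith_of_isLUB {X ι : Type*} [PseudoMetricSpace X] {w : ι → X → ℝ} {v : X → ℝ}
    {L : NNReal} (hw : ∀ i, LipschitzWith L (w i)) (hv : ∀ x, IsLUB (range fun i => w i x) (v x)) :
    LipschitzWith L v := by
  refine LipschitzWith.of_le_add_mul L fun x y => (hv x).2 ?_
  rintro _ ⟨i, rfl⟩
  calc w i x ≤ w i y + L * dist x y := (hw i).le_add_mul x y
    _ ≤ v y + L * dist x y := by gcongr; exact (hv y).1 ⟨i, rfl⟩

section Periodic

variable {n : ℕ}

lemma exists_isCompact_forall_add_intVec_mem (n : ℕ) :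
    ∃ Q : Set (En n), IsCompact Q ∧ Q.Nonempty ∧
      ∀ x : En n, ∃ k : Fin n → ℤ, x + intVec n k ∈ Q := by
  refine ⟨WithLp.toLp 2 '' Icc (0 : Fin n → ℝ) 1, isCompact_Icc.image (PiLp.continuous_toLp 2 _),
    (nonempty_Icc.mpr zero_le_one).image _, fun x => ?_⟩
  refine ⟨fun i => -⌊x i⌋, fun i => Int.fract (x i),
    ⟨fun i => Int.fract_nonneg _, fun i => (Int.fract_lt_one _).le⟩, ?_⟩
  ext i
  simp [intVec, Int.fract, sub_eq_add_neg]

lemma intVec_neg (k : Fin n → ℤ) : intVec n (-k) = -intVec n k := by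
  ext i
  simp [intVec]

lemma ZPeriodic.exists_forall_le {f : En n → ℝ} (hper : ZPeriodic f) (hf : Continuous f) :
    ∃ m, ∀ x, f m ≤ f x := by
  obtain ⟨Q, hQ, hne, hcover⟩ := exists_isCompact_forall_add_intVec_mem n
  obtain ⟨m, -, hmin⟩ := hQ.exists_isMinOn hne hf.continuousOn
  refine ⟨m, fun x => ?_⟩
  obtain ⟨k, hk⟩ := hcover x
  exact hper x k ▸ hmin hk

lemma ZPeriodic.exists_forall_ge {f : En n → ℝ} (hper : ZPeriodic f) (hf : Continuous f) :
    ∃ m, ∀ x, f x ≤ f m := by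
  have hneg : ZPeriodic fun x => -f x := fun x k => congrArg Neg.neg (hper x k)
  obtain ⟨m, hm⟩ := hneg.exists_forall_le hf.neg
  exact ⟨m, fun x => neg_le_neg_iff.mp (hm x)⟩

lemma ZPeriodic.of_forall_le {f : En n → ℝ}
    (hle : ∀ (x : En n) (k : Fin n → ℤ), f (x + intVec n k) ≤ f x) : ZPeriodic f := by
  refine fun x k => le_antisymm (hle x k) ?_
  have hback := hle (x + intVec n k) (-k)
  rwa [intVec_neg, add_neg_cancel_right] at hback

lemma Coercive.exists_forall_norm_le {H : En n → En n → ℝ} (hH : Coercive H) (M : ℝ) :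
    ∃ R, ∀ x p, H x p ≤ M → ‖p‖ ≤ R := by
  obtain ⟨R, hR⟩ := hH (M + 1)
  refine ⟨R, fun x p hp => ?_⟩
  by_contra! hlt
  linarith [hR x p hlt.le]

lemma Coercive.exists_forall_norm_le_of_le_add_mul {H : En n → En n → ℝ} (hH : Coercive H)
    {f g : En n → ℝ} (hf : Continuous f) (hg : Continuous g) (hf_per : ZPeriodic f)
    (hg_per : ZPeriodic g) {a : ℝ} (ha : 0 ≤ a) :
    ∃ R, ∀ x p, H x p ≤ f x + a * g x → ‖p‖ ≤ R := by
  obtain ⟨m, hm⟩ := hf_per.exists_forall_ge hf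
  obtain ⟨k, hk⟩ := hg_per.exists_forall_ge hg
  obtain ⟨R, hR⟩ := hH.exists_forall_norm_le (f m + a * g k)
  refine ⟨R, fun x p hp => hR x p (hp.trans ?_)⟩
  gcongr
  exacts [hm x, hk x]

end Periodic

section SingleEquation

variable {n : ℕ} {H : En n → En n → ℝ} {c : ℝ} {w wo ρ : En n → ℝ}

lemma StatSubIneq.of_strict_touching
    (h : ∀ ψ : En n → ℝ, ContDiff ℝ 1 ψ → ∀ x₀, ψ x₀ = w x₀ →
      (∀ᶠ y in 𝓝 x₀, w y + ‖y - x₀‖ ^ 2 ≤ ψ y) →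
      H x₀ (gradient ψ x₀) + c * (w x₀ - wo x₀) ≤ ρ x₀) :
    StatSubIneq H c w wo ρ := by
  intro φ hφ x₀ hmax
  rw [← gradient_add_mul_norm_sub_sq_add_const_self (hφ.differentiable one_ne_zero x₀) 1
    (w x₀ - φ x₀)]
  refine h _ ((hφ.add (contDiff_mul_norm_sub_sq 1 x₀)).add contDiff_const) x₀ (by simp) ?_
  filter_upwards [hmax] with y hy
  linarith

lemma StatSuperIneq.of_strict_touching
    (h : ∀ ψ : En n → ℝ, ContDiff ℝ 1 ψ → ∀ x₀, ψ x₀ = w x₀ →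
      (∀ᶠ y in 𝓝 x₀, ψ y + ‖y - x₀‖ ^ 2 ≤ w y) →
      ρ x₀ ≤ H x₀ (gradient ψ x₀) + c * (w x₀ - wo x₀)) :
    StatSuperIneq H c w wo ρ := by
  intro φ hφ x₀ hmin
  rw [← gradient_add_mul_norm_sub_sq_add_const_self (hφ.differentiable one_ne_zero x₀) (-1)
    (w x₀ - φ x₀)]
  refine h _ ((hφ.add (contDiff_mul_norm_sub_sq (-1) x₀)).add contDiff_const) x₀ (by simp) ?_
  filter_upwards [hmin] with y hy
  linarith

lemma statSubIneq_const {a b : ℝ} (h : ∀ x, H x 0 + c * (a - b) ≤ ρ x) :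
    StatSubIneq H c (fun _ => a) (fun _ => b) ρ := by
  intro φ hφ x₀ hmax
  rw [← gradient_eq_of_isLocalMax_sub (differentiableAt_const a)
    (hφ.differentiable one_ne_zero x₀) hmax, gradient_fun_const]
  exact h x₀

lemma StatSuperIneq.le_of_isLocalMin (h : StatSuperIneq H c w wo ρ) {x : En n}
    (hmin : IsLocalMin w x) : ρ x ≤ H x 0 + c * (w x - wo x) := by
  simpa only [gradient_fun_const] using
    h (fun _ => 0) contDiff_const x (by simpa only [sub_zero] using hmin)

lemma StatSubIneq.mono_right (h : StatSubIneq H c w wo ρ) (hc : 0 ≤ c) {wo' : En n → ℝ}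
    (hle : ∀ x, wo x ≤ wo' x) : StatSubIneq H c w wo' ρ := by
  intro φ hφ x₀ hmax
  have hcoupling : c * (w x₀ - wo' x₀) ≤ c * (w x₀ - wo x₀) := by gcongr; exact hle x₀
  linarith [h φ hφ x₀ hmax]

lemma StatSubIneq.comp_add_right (h : StatSubIneq H c w wo ρ) (e : En n) :
    StatSubIneq (fun x => H (x + e)) c (fun x => w (x + e)) (fun x => wo (x + e))
      (fun x => ρ (x + e)) := by
  intro φ hφ x₀ hmax
  have hgrad : gradient (fun x => φ (x - e)) (x₀ + e) = gradient φ x₀ := by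
    simp only [gradient, fderiv_comp_sub, add_sub_cancel_right]
  have hshift : Tendsto (fun x => x - e) (𝓝 (x₀ + e)) (𝓝 x₀) :=
    Continuous.tendsto' (by fun_prop) _ _ (add_sub_cancel_right x₀ e)
  rw [← hgrad]
  refine h (fun x => φ (x - e)) (hφ.comp (contDiff_id.sub contDiff_const)) (x₀ + e) ?_
  filter_upwards [hshift.eventually hmax] with y hy
  simpa only [sub_add_cancel, add_sub_cancel_right] using hy

lemma StatSubIneq.add_mul_sub_le (h : StatSubIneq H c w wo ρ) {g : En n → ℝ}
    (hgH : ∀ x p, g x ≤ H x p) (hg : Continuous g) (hw : Continuous w) (hwo : Continuous wo)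
    (hρ : Continuous ρ) (x : En n) : g x + c * (w x - wo x) ≤ ρ x := by
  by_contra! hlt
  have hnear : ∀ᶠ y in 𝓝 x, ρ y < g y + c * (w y - wo y) :=
    hρ.continuousAt.eventually_lt (by fun_prop) hlt
  obtain ⟨m, ⟨φ, hφ, hmax⟩, hm⟩ :=
    ((frequently_exists_contDiff_isLocalMax_sub hw x).and_eventually hnear).exists
  linarith [h φ hφ m hmax, hgH m (gradient φ m)]

lemma StatSubIneq.lipschitzWith (h : StatSubIneq H c w wo ρ) (hw : Continuous w) {L : NNReal}
    {C : ℝ} (hgrowth : ∀ x, w x ≤ C + L * ‖x‖)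
    (hL : ∀ x p, H x p + c * (w x - wo x) ≤ ρ x → ‖p‖ ≤ L) : LipschitzWith L w :=
  lipschitzWith_of_norm_gradient_le hw hgrowth fun φ hφ x hmax => hL x _ (h φ hφ x hmax)

lemma continuous_residual (hH : Continuous fun q : En n × En n => H q.1 q.2)
    (hwo : Continuous wo) (hρ : Continuous ρ) {ψ : En n → ℝ} (hψ : ContDiff ℝ 1 ψ) :
    Continuous fun q : En n × ℝ =>
      H q.1 (gradient ψ q.1) + c * (ψ q.1 + q.2 - wo q.1) - ρ q.1 := by
  have hgrad := continuous_gradient_of_contDiff hψ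
  have hψc := hψ.continuous
  have hHψ : Continuous fun q : En n × ℝ => H q.1 (gradient ψ q.1) :=
    hH.comp (f := fun q : En n × ℝ => (q.1, gradient ψ q.1)) (by fun_prop)
  exact (hHψ.add (continuous_const.mul (by fun_prop))).sub (by fun_prop)

lemma StatSubIneq.of_isLUB {ι : Type*} {ws wos : ι → En n → ℝ}
    (hH : Continuous fun q : En n × En n => H q.1 q.2) (hc : 0 ≤ c) (hρ : Continuous ρ)
    (hwo : Continuous wo) (hws : ∀ i, Continuous (ws i))
    (hsub : ∀ i, StatSubIneq H c (ws i) (wos i) ρ)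
    (hlub : ∀ x, IsLUB (range fun i => ws i x) (w x)) (hle : ∀ i x, wos i x ≤ wo x) :
    StatSubIneq H c w wo ρ := by
  refine .of_strict_touching fun ψ hψ x₀ hψ₀ htouch => ?_
  by_contra! hviol
  have hψc := hψ.continuous
  have hstrict : ∀ᶠ q : En n × ℝ in 𝓝 (x₀, 0),
      0 < H q.1 (gradient ψ q.1) + c * (ψ q.1 + -q.2 - wo q.1) - ρ q.1 := by
    have hcont := (continuous_residual (c := c) hH hwo hρ hψ).comp
      (continuous_id.prodMap continuous_neg)
    refine continuousAt_const.eventually_lt hcont.continuousAt ?_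
    simpa [hψ₀] using hviol
  obtain ⟨r, hr, δ, hδ, hδr, hball⟩ := exists_closedBall_forall_of_eventually hstrict htouch
  obtain ⟨_, ⟨i, rfl⟩, hi, -⟩ := (hlub x₀).exists_between (sub_lt_self (w x₀) hδ)
  have hws_le : ∀ y, ws i y ≤ w y := fun y => (hlub y).1 ⟨i, rfl⟩
  have hboundary : ∀ y ∈ Metric.closedBall x₀ r \ Metric.ball x₀ r,
      ws i y - ψ y < ws i x₀ - ψ x₀ := by
    rintro y ⟨hy, hyr⟩
    have hnorm : ‖y - x₀‖ = r :=
      mem_sphere_iff_norm.mp (Metric.closedBall_sdiff_ball (x := x₀) ▸ ⟨hy, hyr⟩)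
    have hty := (hball y hy).2
    rw [hnorm] at hty
    linarith [hws_le y]
  obtain ⟨m, hm, hmax⟩ := (isCompact_closedBall x₀ r).exists_isMaxOn_mem_subset
    (f := fun y => ws i y - ψ y) (by have := hws i; fun_prop)
    (Metric.mem_closedBall_self hr.le) hboundary
  have hsubm := hsub i ψ hψ m (hmax.isLocalMax (Metric.closedBall_mem_nhds_of_mem hm))
  have hmx₀ : ws i x₀ - ψ x₀ ≤ ws i m - ψ m := hmax (Metric.mem_closedBall_self hr.le)
  have hcoupling : c * (ψ m + -δ - wo m) ≤ c * (ws i m - wos i m) := by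
    gcongr
    · linarith
    · exact hle i m
  linarith [(hball m (Metric.ball_subset_closedBall hm)).1]

end SingleEquation

section Bump

variable {n : ℕ} {H : En n → En n → ℝ} {c : ℝ} {v vo ρ : En n → ℝ}

open scoped Classical in
/-- `v` raised to `max v ψ` on `U` and left unchanged elsewhere: the competitor in Perron's
method. -/
noncomputable def raiseOn {X : Type*} (U : Set X) (v ψ : X → ℝ) : X → ℝ :=
  U.piecewise (fun x => max (v x) (ψ x)) v

lemma raiseOn_of_mem {X : Type*} {U : Set X} {v ψ : X → ℝ} {x : X} (hx : x ∈ U) :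
    raiseOn U v ψ x = max (v x) (ψ x) := by
  classical exact piecewise_eq_of_mem _ _ _ hx

lemma raiseOn_of_notMem {X : Type*} {U : Set X} {v ψ : X → ℝ} {x : X} (hx : x ∉ U) :
    raiseOn U v ψ x = v x := by
  classical exact piecewise_eq_of_notMem _ _ _ hx

lemma le_raiseOn {X : Type*} (U : Set X) (v ψ : X → ℝ) (x : X) : v x ≤ raiseOn U v ψ x := by
  by_cases hx : x ∈ U
  · exact (le_max_left _ _).trans_eq (raiseOn_of_mem hx).symm
  · exact (raiseOn_of_notMem hx).ge

lemma raiseOn_le_add {X : Type*} {U : Set X} {v ψ : X → ℝ} {δ : ℝ} (hδ : 0 ≤ δ)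
    (hψ : ∀ x ∈ U, ψ x ≤ v x + δ) (x : X) : raiseOn U v ψ x ≤ v x + δ := by
  by_cases hx : x ∈ U
  · rw [raiseOn_of_mem hx]
    exact max_le (le_add_of_nonneg_right hδ) (hψ x hx)
  · rw [raiseOn_of_notMem hx]
    exact le_add_of_nonneg_right hδ

lemma continuous_raiseOn {X : Type*} [TopologicalSpace X] {U : Set X} {v ψ : X → ℝ}
    (hv : Continuous v) (hψ : Continuous ψ) (hle : ∀ x ∈ frontier U, ψ x ≤ v x) :
    Continuous (raiseOn U v ψ) := by
  classical exact (hv.max hψ).piecewise (fun x hx => max_eq_left (hle x hx)) hv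

lemma StatSubIneq.raise (h : StatSubIneq H c v vo ρ) {U : Set (En n)} (hU : IsOpen U)
    {ψ : En n → ℝ} (hψ : ContDiff ℝ 1 ψ)
    (hsub : ∀ x ∈ U, H x (gradient ψ x) + c * (ψ x - vo x) ≤ ρ x) :
    StatSubIneq H c (raiseOn U v ψ) vo ρ := by
  intro χ hχ x hmax
  by_cases hx : raiseOn U v ψ x = v x
  · rw [hx]
    refine h χ hχ x ?_
    filter_upwards [hmax] with y hy
    linarith [le_raiseOn U v ψ y]
  · have hxU : x ∈ U := not_imp_comm.mp raiseOn_of_notMem hx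
    have hxψ : raiseOn U v ψ x = ψ x := by
      rw [raiseOn_of_mem hxU] at hx ⊢
      exact (max_choice _ _).resolve_left hx
    have hmaxψ : IsLocalMax (fun y => ψ y - χ y) x := by
      filter_upwards [hmax, hU.mem_nhds hxU] with y hy hyU
      rw [raiseOn_of_mem hyU, hxψ] at hy
      linarith [le_max_right (v y) (ψ y)]
    rw [hxψ, ← gradient_eq_of_isLocalMax_sub (hψ.differentiable one_ne_zero x)
      (hχ.differentiable one_ne_zero x) hmaxψ]
    exact hsub x hxU

lemma StatSubIneq.exists_bump (h : StatSubIneq H c v vo ρ)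
    (hH : Continuous fun q : En n × En n => H q.1 q.2) (hρ : Continuous ρ) (hv : Continuous v)
    (hvo : Continuous vo) {ψ : En n → ℝ} (hψ : ContDiff ℝ 1 ψ) {x₀ : En n} (hψ₀ : ψ x₀ = v x₀)
    (htouch : ∀ᶠ y in 𝓝 x₀, ψ y + ‖y - x₀‖ ^ 2 ≤ v y)
    (hstrict : H x₀ (gradient ψ x₀) + c * (v x₀ - vo x₀) < ρ x₀) {U : Set (En n)}
    (hU : U ∈ 𝓝 x₀) :
    ∃ (w : En n → ℝ) (δ : ℝ), Continuous w ∧ StatSubIneq H c w vo ρ ∧ (∀ x, v x ≤ w x) ∧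
      (∀ x, w x ≤ v x + δ) ∧ (∀ x ∉ U, w x = v x) ∧ v x₀ < w x₀ := by
  have hstrict_near : ∀ᶠ q : En n × ℝ in 𝓝 (x₀, 0),
      H q.1 (gradient ψ q.1) + c * (ψ q.1 + q.2 - vo q.1) - ρ q.1 < 0 := by
    refine (continuous_residual hH hvo hρ hψ).continuousAt.eventually_lt continuousAt_const ?_
    simpa [hψ₀] using hstrict
  obtain ⟨r, hr, δ, hδ, hδr, hball⟩ :=
    exists_closedBall_forall_of_eventually hstrict_near (htouch.and hU)
  set B := Metric.ball x₀ r
  have hB : ∀ x ∈ B, x ∈ Metric.closedBall x₀ r := fun x hx => Metric.ball_subset_closedBall hx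
  have hsub : ∀ x ∈ B, H x (gradient (fun y => ψ y + δ) x) + c * (ψ x + δ - vo x) ≤ ρ x := by
    intro x hx
    rw [show gradient (fun y => ψ y + δ) x = gradient ψ x by simp only [gradient, fderiv_add_const]]
    linarith [(hball x (hB x hx)).1]
  have hfrontier : ∀ x ∈ frontier B, ψ x + δ ≤ v x := by
    intro x hx
    have hxr : x ∈ Metric.sphere x₀ r := Metric.frontier_ball_subset_sphere hx
    have hxtouch := (hball x (Metric.sphere_subset_closedBall hxr)).2.1
    rw [mem_sphere_iff_norm.mp hxr] at hxtouch
    linarith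
  refine ⟨raiseOn B v fun y => ψ y + δ, δ,
    continuous_raiseOn hv (hψ.continuous.add_const δ) hfrontier,
    h.raise Metric.isOpen_ball (hψ.add contDiff_const) hsub, le_raiseOn _ _ _,
    raiseOn_le_add hδ.le fun x hx => ?_, fun x hx => ?_, ?_⟩
  · linarith [(hball x (hB x hx)).2.1, sq_nonneg ‖x - x₀‖]
  · exact raiseOn_of_notMem fun hxB => hx (hball x (hB x hxB)).2.2
  · rw [raiseOn_of_mem (Metric.mem_ball_self hr), hψ₀]
    exact (lt_add_of_pos_right _ hδ).trans_le (le_max_right _ _)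

end Bump

/-- The competitors in Perron's method for the system `Fᵢ(x, Dwᵢ) + cᵢ (wᵢ - wⱼ) = fᵢ`: pairs of
`L`-Lipschitz subsolutions, not required to be periodic, that are nonpositive on the common zero
set of `f₁` and `f₂`. -/
structure IsPerronSub {n : ℕ} (F₁ F₂ : En n → En n → ℝ) (c₁ c₂ : ℝ) (f₁ f₂ : En n → ℝ)
    (L : NNReal) (w : (En n → ℝ) × (En n → ℝ)) : Prop where
  lipschitz_fst : LipschitzWith L w.1
  lipschitz_snd : LipschitzWith L w.2
  cellSub : CellSub F₁ F₂ c₁ c₂ w.1 w.2 f₁ f₂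
  nonpos_fst : ∀ x, f₁ x = 0 → f₂ x = 0 → w.1 x ≤ 0
  nonpos_snd : ∀ x, f₁ x = 0 → f₂ x = 0 → w.2 x ≤ 0

section Perron

variable {n : ℕ} {F₁ F₂ : En n → En n → ℝ} {c₁ c₂ : ℝ} {f₁ f₂ : En n → ℝ} {L : NNReal}
  {v w : (En n → ℝ) × (En n → ℝ)}

lemma IsPerronSub.swap (h : IsPerronSub F₁ F₂ c₁ c₂ f₁ f₂ L w) :
    IsPerronSub F₂ F₁ c₂ c₁ f₂ f₁ L w.swap where
  lipschitz_fst := h.lipschitz_snd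
  lipschitz_snd := h.lipschitz_fst
  cellSub := h.cellSub.symm
  nonpos_fst x hx₂ hx₁ := h.nonpos_snd x hx₁ hx₂
  nonpos_snd x hx₂ hx₁ := h.nonpos_fst x hx₁ hx₂

lemma isGreatest_isPerronSub_swap (h : IsGreatest {w | IsPerronSub F₁ F₂ c₁ c₂ f₁ f₂ L w} v) :
    IsGreatest {w | IsPerronSub F₂ F₁ c₂ c₁ f₂ f₁ L w} v.swap :=
  ⟨h.1.swap, fun _ hw => Prod.swap_le_swap.mp (h.2 hw.swap)⟩

lemma isPerronSub_zero (hF₁ : ∀ x, F₁ x 0 ≤ f₁ x) (hF₂ : ∀ x, F₂ x 0 ≤ f₂ x) :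
    IsPerronSub F₁ F₂ c₁ c₂ f₁ f₂ L (fun _ => 0, fun _ => 0) where
  lipschitz_fst := .const' 0
  lipschitz_snd := .const' 0
  cellSub := ⟨statSubIneq_const (by simpa using hF₁), statSubIneq_const (by simpa using hF₂)⟩
  nonpos_fst _ _ _ := le_rfl
  nonpos_snd _ _ _ := le_rfl

lemma IsPerronSub.comp_add_intVec (h : IsPerronSub F₁ F₂ c₁ c₂ f₁ f₂ L w)
    (hF₁ : ZPeriodicH F₁) (hF₂ : ZPeriodicH F₂) (hf₁ : ZPeriodic f₁) (hf₂ : ZPeriodic f₂)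
    (k : Fin n → ℤ) :
    IsPerronSub F₁ F₂ c₁ c₂ f₁ f₂ L
      (fun x => w.1 (x + intVec n k), fun x => w.2 (x + intVec n k)) where
  lipschitz_fst := by
    simpa [Function.comp_def] using h.lipschitz_fst.comp (isometry_add_right (intVec n k)).lipschitz
  lipschitz_snd := by
    simpa [Function.comp_def] using h.lipschitz_snd.comp (isometry_add_right (intVec n k)).lipschitz
  cellSub := by
    have hsub₁ := h.cellSub.1.comp_add_right (intVec n k)
    have hsub₂ := h.cellSub.2.comp_add_right (intVec n k)
    simp only [funext fun x => funext (hF₁ x k), funext fun x => hf₁ x k] at hsub₁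
    simp only [funext fun x => funext (hF₂ x k), funext fun x => hf₂ x k] at hsub₂
    exact ⟨hsub₁, hsub₂⟩
  nonpos_fst x hx₁ hx₂ := h.nonpos_fst _ (by rw [hf₁, hx₁]) (by rw [hf₂, hx₂])
  nonpos_snd x hx₁ hx₂ := h.nonpos_snd _ (by rw [hf₁, hx₁]) (by rw [hf₂, hx₂])

lemma IsPerronSub.fst_le_mul_dist (h : IsPerronSub F₁ F₂ c₁ c₂ f₁ f₂ L w) {z : En n}
    (hz₁ : f₁ z = 0) (hz₂ : f₂ z = 0) (x : En n) : w.1 x ≤ L * dist x z := by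
  linarith [h.lipschitz_fst.le_add_mul x z, h.nonpos_fst z hz₁ hz₂]

lemma exists_isGreatest_isPerronSub (hF₁ : Continuous fun q : En n × En n => F₁ q.1 q.2)
    (hF₂ : Continuous fun q : En n × En n => F₂ q.1 q.2) (hc₁ : 0 ≤ c₁) (hc₂ : 0 ≤ c₂)
    (hf₁ : Continuous f₁) (hf₂ : Continuous f₂) (hF₁f₁ : ∀ x, F₁ x 0 ≤ f₁ x)
    (hF₂f₂ : ∀ x, F₂ x 0 ≤ f₂ x) {z : En n} (hz₁ : f₁ z = 0) (hz₂ : f₂ z = 0) :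
    ∃ v, IsGreatest {w | IsPerronSub F₁ F₂ c₁ c₂ f₁ f₂ L w} v := by
  set S := {w | IsPerronSub F₁ F₂ c₁ c₂ f₁ f₂ L w}
  have : Nonempty S := ⟨⟨_, isPerronSub_zero hF₁f₁ hF₂f₂⟩⟩
  have hlub₁ : ∀ x, IsLUB (range fun w : S => w.1.1 x) (⨆ w : S, w.1.1 x) := fun x =>
    isLUB_ciSup ⟨L * dist x z, forall_mem_range.mpr fun w => w.2.fst_le_mul_dist hz₁ hz₂ x⟩
  have hlub₂ : ∀ x, IsLUB (range fun w : S => w.1.2 x) (⨆ w : S, w.1.2 x) := fun x =>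
    isLUB_ciSup ⟨L * dist x z, forall_mem_range.mpr fun w => w.2.swap.fst_le_mul_dist hz₂ hz₁ x⟩
  have hlip₁ := lipschitzWith_of_isLUB (fun w : S => w.2.lipschitz_fst) hlub₁
  have hlip₂ := lipschitzWith_of_isLUB (fun w : S => w.2.lipschitz_snd) hlub₂
  have hsub₁ := StatSubIneq.of_isLUB hF₁ hc₁ hf₁ hlip₂.continuous
    (fun w : S => w.2.lipschitz_fst.continuous) (fun w => w.2.cellSub.1) hlub₁
    fun w x => (hlub₂ x).1 ⟨w, rfl⟩
  have hsub₂ := StatSubIneq.of_isLUB hF₂ hc₂ hf₂ hlip₁.continuous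
    (fun w : S => w.2.lipschitz_snd.continuous) (fun w => w.2.cellSub.2) hlub₂
    fun w x => (hlub₁ x).1 ⟨w, rfl⟩
  refine ⟨(fun x => ⨆ w : S, w.1.1 x, fun x => ⨆ w : S, w.1.2 x),
    ⟨hlip₁, hlip₂, ⟨hsub₁, hsub₂⟩, fun x hx₁ hx₂ => ?_, fun x hx₁ hx₂ => ?_⟩, fun w hw =>
    ⟨fun x => (hlub₁ x).1 ⟨⟨w, hw⟩, rfl⟩, fun x => (hlub₂ x).1 ⟨⟨w, hw⟩, rfl⟩⟩⟩
  · exact ciSup_le fun w => w.2.nonpos_fst x hx₁ hx₂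
  · exact ciSup_le fun w => w.2.nonpos_snd x hx₁ hx₂

lemma zPeriodic_fst_of_isGreatest (h : IsGreatest {w | IsPerronSub F₁ F₂ c₁ c₂ f₁ f₂ L w} v)
    (hF₁ : ZPeriodicH F₁) (hF₂ : ZPeriodicH F₂) (hf₁ : ZPeriodic f₁) (hf₂ : ZPeriodic f₂) :
    ZPeriodic v.1 :=
  .of_forall_le fun x k => (h.2 (h.1.comp_add_intVec hF₁ hF₂ hf₁ hf₂ k)).1 x

lemma IsPerronSub.raise_fst (h : IsPerronSub F₁ F₂ c₁ c₂ f₁ f₂ L v) (hc₁ : 0 ≤ c₁)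
    (hc₂ : 0 < c₂) (hf₂ : Continuous f₂) (hF₂ : ∀ x p, 0 ≤ F₂ x p)
    (hL : ∀ x p, F₁ x p ≤ f₁ x + c₁ / c₂ * f₂ x → ‖p‖ ≤ L) {u : En n → ℝ} (hu : Continuous u)
    (hsub : StatSubIneq F₁ c₁ u v.2 f₁) (hle : ∀ x, v.1 x ≤ u x) {δ : ℝ}
    (hδ : ∀ x, u x ≤ v.1 x + δ) (heq : ∀ x, f₁ x = 0 → f₂ x = 0 → u x = v.1 x) :
    IsPerronSub F₁ F₂ c₁ c₂ f₁ f₂ L (u, v.2) := by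
  have hgrowth : ∀ x, u x ≤ v.1 0 + δ + L * ‖x‖ := fun x => by
    linarith [hδ x, dist_zero_right x ▸ h.lipschitz_fst.le_add_mul x 0]
  have hgrad : ∀ x p, F₁ x p + c₁ * (u x - v.2 x) ≤ f₁ x → ‖p‖ ≤ L := by
    intro x p hp
    refine hL x p ?_
    have hcoupling : c₂ * (v.2 x - v.1 x) ≤ f₂ x := by
      simpa using h.cellSub.2.add_mul_sub_le hF₂ continuous_const h.lipschitz_snd.continuous
        h.lipschitz_fst.continuous hf₂ x
    have hgap : v.2 x - u x ≤ f₂ x / c₂ := by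
      rw [le_div_iff₀' hc₂]
      nlinarith [hle x]
    calc F₁ x p ≤ f₁ x + c₁ * (v.2 x - u x) := by linarith
      _ ≤ f₁ x + c₁ * (f₂ x / c₂) := by gcongr
      _ = f₁ x + c₁ / c₂ * f₂ x := by ring
  exact ⟨hsub.lipschitzWith hu hgrowth hgrad, h.lipschitz_snd,
    ⟨hsub, h.cellSub.2.mono_right hc₂.le hle⟩,
    fun x hx₁ hx₂ => (heq x hx₁ hx₂).trans_le (h.nonpos_fst x hx₁ hx₂), h.nonpos_snd⟩

lemma statSuperIneq_fst_of_isGreatest (h : IsGreatest {w | IsPerronSub F₁ F₂ c₁ c₂ f₁ f₂ L w} v)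
    (hF₁ : Continuous fun q : En n × En n => F₁ q.1 q.2) (hc₁ : 0 ≤ c₁) (hc₂ : 0 < c₂)
    (hf₁ : Continuous f₁) (hf₂ : Continuous f₂) (hF₁_nonneg : ∀ x p, 0 ≤ F₁ x p)
    (hF₂_nonneg : ∀ x p, 0 ≤ F₂ x p) (hF₁f₁ : ∀ x, F₁ x 0 ≤ f₁ x) (hF₂f₂ : ∀ x, F₂ x 0 ≤ f₂ x)
    (hL : ∀ x p, F₁ x p ≤ f₁ x + c₁ / c₂ * f₂ x → ‖p‖ ≤ L) :
    StatSuperIneq F₁ c₁ v.1 v.2 f₁ := by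
  refine .of_strict_touching fun ψ hψ x₀ hψ₀ htouch => ?_
  by_contra! hviol
  have hzero_le := h.2 (isPerronSub_zero hF₁f₁ hF₂f₂)
  set A := {x | f₁ x = 0 ∧ f₂ x = 0}
  have hA : IsClosed A :=
    (isClosed_eq hf₁ continuous_const).inter (isClosed_eq hf₂ continuous_const)
  have hx₀ : x₀ ∉ A := by
    rintro ⟨hx₁, hx₂⟩
    have hv₁ : v.1 x₀ = 0 := (h.1.nonpos_fst x₀ hx₁ hx₂).antisymm (hzero_le.1 x₀)
    have hv₂ : v.2 x₀ = 0 := (h.1.nonpos_snd x₀ hx₁ hx₂).antisymm (hzero_le.2 x₀)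
    rw [hv₁, hv₂, hx₁] at hviol
    linarith [hF₁_nonneg x₀ (gradient ψ x₀)]
  obtain ⟨u, δ, hu, hsub, hle, hδ, heq, hlt⟩ := h.1.cellSub.1.exists_bump hF₁ hf₁
    h.1.lipschitz_fst.continuous h.1.lipschitz_snd.continuous hψ hψ₀ htouch hviol
    (hA.isOpen_compl.mem_nhds hx₀)
  have hu_mem := h.1.raise_fst hc₁ hc₂ hf₂ hF₂_nonneg hL hu hsub hle hδ
    fun x hx₁ hx₂ => heq x (not_not_intro ⟨hx₁, hx₂⟩)
  exact hlt.not_ge ((h.2 hu_mem).1 x₀)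

end Perron

section ErgodicConstant

variable {n : ℕ} {H₁ H₂ : En n → En n → ℝ} {c₁ c₂ a b : ℝ} {v₁ v₂ : En n → ℝ}

lemma CellSuper.const_le (h : CellSuper H₁ H₂ c₁ c₂ v₁ v₂ (fun _ => a) fun _ => a)
    (hc₁ : 0 ≤ c₁) (hc₂ : 0 ≤ c₂) (hv₁ : Continuous v₁) (hv₂ : Continuous v₂)
    (hper₁ : ZPeriodic v₁) (hper₂ : ZPeriodic v₂) (hH₁ : ∀ x, H₁ x 0 ≤ b)
    (hH₂ : ∀ x, H₂ x 0 ≤ b) : a ≤ b := by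
  obtain ⟨m₁, hm₁⟩ := hper₁.exists_forall_le hv₁
  obtain ⟨m₂, hm₂⟩ := hper₂.exists_forall_le hv₂
  rcases le_total (v₁ m₁) (v₂ m₂) with hle | hle
  · have htest := h.1.le_of_isLocalMin (Eventually.of_forall hm₁)
    have hcoupling := mul_nonpos_of_nonneg_of_nonpos hc₁
      (sub_nonpos.mpr (hle.trans (hm₂ m₁)))
    linarith [hH₁ m₁]
  · have htest := h.2.le_of_isLocalMin (Eventually.of_forall hm₂)
    have hcoupling := mul_nonpos_of_nonneg_of_nonpos hc₂
      (sub_nonpos.mpr (hle.trans (hm₁ m₂)))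
    linarith [hH₂ m₂]

lemma CellSub.le_const (h : CellSub H₁ H₂ c₁ c₂ v₁ v₂ (fun _ => a) fun _ => a)
    (hc₁ : 0 < c₁) (hc₂ : 0 < c₂) (hv₁ : Continuous v₁) (hv₂ : Continuous v₂)
    {g₁ g₂ : En n → ℝ} (hg₁ : Continuous g₁) (hg₂ : Continuous g₂)
    (hgH₁ : ∀ x p, g₁ x ≤ H₁ x p) (hgH₂ : ∀ x p, g₂ x ≤ H₂ x p) {z : En n}
    (hz₁ : b ≤ g₁ z) (hz₂ : b ≤ g₂ z) : b ≤ a := by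
  have hcoupling₁ : c₁ * (v₁ z - v₂ z) ≤ a - b := by
    linarith [h.1.add_mul_sub_le hgH₁ hg₁ hv₁ hv₂ continuous_const z]
  have hcoupling₂ : c₂ * (v₂ z - v₁ z) ≤ a - b := by
    linarith [h.2.add_mul_sub_le hgH₂ hg₂ hv₂ hv₁ continuous_const z]
  have hweighted : 0 ≤ (c₁ + c₂) * (a - b) := by
    linarith [mul_le_mul_of_nonneg_left hcoupling₁ hc₂.le,
      mul_le_mul_of_nonneg_left hcoupling₂ hc₁.le]
  exact sub_nonneg.mp (nonneg_of_mul_nonneg_right hweighted (add_pos hc₁ hc₂))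

end ErgodicConstant

section Main

variable {n : ℕ} {F₁ F₂ : En n → En n → ℝ} {f₁ f₂ : En n → ℝ} {c₁ c₂ : ℝ}

theorem exists_zPeriodic_cellSolution (hc₁ : 0 < c₁) (hc₂ : 0 < c₂)
    (hF₁ : Continuous fun q : En n × En n => F₁ q.1 q.2)
    (hF₂ : Continuous fun q : En n × En n => F₂ q.1 q.2)
    (hF₁_per : ZPeriodicH F₁) (hF₂_per : ZPeriodicH F₂)
    (hF₁_coercive : Coercive F₁) (hF₂_coercive : Coercive F₂)
    (hf₁ : Continuous f₁) (hf₂ : Continuous f₂) (hf₁_per : ZPeriodic f₁) (hf₂_per : ZPeriodic f₂)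
    (hzero : ∃ z, f₁ z = 0 ∧ f₂ z = 0)
    (hF₁_nonneg : ∀ x p, 0 ≤ F₁ x p) (hF₂_nonneg : ∀ x p, 0 ≤ F₂ x p)
    (hF₁f₁ : ∀ x, F₁ x 0 ≤ f₁ x) (hF₂f₂ : ∀ x, F₂ x 0 ≤ f₂ x) :
    ∃ v₁ v₂ : En n → ℝ, ZPeriodic v₁ ∧ ZPeriodic v₂ ∧
      CellSolution F₁ F₂ c₁ c₂ v₁ v₂ f₁ f₂ := by
  obtain ⟨z, hz₁, hz₂⟩ := hzero
  obtain ⟨R₁, hR₁⟩ := hF₁_coercive.exists_forall_norm_le_of_le_add_mul hf₁ hf₂ hf₁_per hf₂_per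
    (div_pos hc₁ hc₂).le
  obtain ⟨R₂, hR₂⟩ := hF₂_coercive.exists_forall_norm_le_of_le_add_mul hf₂ hf₁ hf₂_per hf₁_per
    (div_pos hc₂ hc₁).le
  set L := (max R₁ R₂).toNNReal
  have hR₁L : R₁ ≤ L := (le_max_left _ _).trans (Real.le_coe_toNNReal _)
  have hR₂L : R₂ ≤ L := (le_max_right _ _).trans (Real.le_coe_toNNReal _)
  obtain ⟨v, hv⟩ := exists_isGreatest_isPerronSub (L := L) hF₁ hF₂ hc₁.le hc₂.le hf₁ hf₂
    hF₁f₁ hF₂f₂ hz₁ hz₂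
  have hv_swap := isGreatest_isPerronSub_swap hv
  have hsuper₁ := statSuperIneq_fst_of_isGreatest hv hF₁ hc₁.le hc₂ hf₁ hf₂ hF₁_nonneg
    hF₂_nonneg hF₁f₁ hF₂f₂ fun x p hp => (hR₁ x p hp).trans hR₁L
  have hsuper₂ := statSuperIneq_fst_of_isGreatest hv_swap hF₂ hc₂.le hc₁ hf₂ hf₁ hF₂_nonneg
    hF₁_nonneg hF₂f₂ hF₁f₁ fun x p hp => (hR₂ x p hp).trans hR₂L
  exact ⟨v.1, v.2, zPeriodic_fst_of_isGreatest hv hF₁_per hF₂_per hf₁_per hf₂_per,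
    zPeriodic_fst_of_isGreatest hv_swap hF₂_per hF₁_per hf₂_per hf₁_per,
    hv.1.lipschitz_fst.continuous, hv.1.lipschitz_snd.continuous, hv.1.cellSub,
    hsuper₁, hsuper₂⟩

theorem ergodic_constant_eq_zero (hc₁ : 0 < c₁) (hc₂ : 0 < c₂)
    (hf₁ : Continuous f₁) (hf₂ : Continuous f₂) (hzero : ∃ z, f₁ z = 0 ∧ f₂ z = 0)
    (hF₁_nonneg : ∀ x p, 0 ≤ F₁ x p) (hF₂_nonneg : ∀ x p, 0 ≤ F₂ x p)
    (hF₁f₁ : ∀ x, F₁ x 0 ≤ f₁ x) (hF₂f₂ : ∀ x, F₂ x 0 ≤ f₂ x)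
    {c : ℝ} {v₁ v₂ : En n → ℝ} (hper₁ : ZPeriodic v₁) (hper₂ : ZPeriodic v₂)
    (hsol : CellSolution (fun x p => F₁ x p - f₁ x) (fun x p => F₂ x p - f₂ x) c₁ c₂ v₁ v₂
      (fun _ => c) fun _ => c) :
    c = 0 := by
  obtain ⟨z, hz₁, hz₂⟩ := hzero
  obtain ⟨hv₁, hv₂, hsub, hsuper⟩ := hsol
  refine le_antisymm ?_ ?_
  · exact hsuper.const_le hc₁.le hc₂.le hv₁ hv₂ hper₁ hper₂
      (fun x => sub_nonpos.mpr (hF₁f₁ x)) fun x => sub_nonpos.mpr (hF₂f₂ x)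
  · exact hsub.le_const hc₁ hc₂ hv₁ hv₂ hf₁.neg hf₂.neg
      (fun x p => neg_le_sub_iff_le_add.mpr (le_add_of_nonneg_left (hF₁_nonneg x p)))
      (fun x p => neg_le_sub_iff_le_add.mpr (le_add_of_nonneg_left (hF₂_nonneg x p)))
      (z := z) (by simp [hz₁]) (by simp [hz₂])

theorem stmt5_general (hc₁ : 0 < c₁) (hc₂ : 0 < c₂)
    (hF₁ : Continuous fun q : En n × En n => F₁ q.1 q.2)
    (hF₂ : Continuous fun q : En n × En n => F₂ q.1 q.2)
    (hF₁_per : ZPeriodicH F₁) (hF₂_per : ZPeriodicH F₂)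
    (hF₁_coercive : Coercive F₁) (hF₂_coercive : Coercive F₂)
    (hf₁ : Continuous f₁) (hf₂ : Continuous f₂) (hf₁_per : ZPeriodic f₁) (hf₂_per : ZPeriodic f₂)
    (hzero : ∃ z, f₁ z = 0 ∧ f₂ z = 0)
    (hF₁_nonneg : ∀ x p, 0 ≤ F₁ x p) (hF₂_nonneg : ∀ x p, 0 ≤ F₂ x p)
    (hF₁f₁ : ∀ x, F₁ x 0 ≤ f₁ x) (hF₂f₂ : ∀ x, F₂ x 0 ≤ f₂ x) :
    (∃ v₁ v₂ : En n → ℝ, ZPeriodic v₁ ∧ ZPeriodic v₂ ∧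
        CellSolution F₁ F₂ c₁ c₂ v₁ v₂ f₁ f₂) ∧
      ∀ (c : ℝ) (v₁ v₂ : En n → ℝ), ZPeriodic v₁ → ZPeriodic v₂ →
        CellSolution (fun x p => F₁ x p - f₁ x) (fun x p => F₂ x p - f₂ x) c₁ c₂ v₁ v₂
          (fun _ => c) (fun _ => c) →
        c = 0 :=
  ⟨exists_zPeriodic_cellSolution hc₁ hc₂ hF₁ hF₂ hF₁_per hF₂_per hF₁_coercive hF₂_coercive
      hf₁ hf₂ hf₁_per hf₂_per hzero hF₁_nonneg hF₂_nonneg hF₁f₁ hF₂f₂,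
    fun _ _ _ hper₁ hper₂ => ergodic_constant_eq_zero hc₁ hc₂ hf₁ hf₂ hzero
      hF₁_nonneg hF₂_nonneg hF₁f₁ hF₂f₂ hper₁ hper₂⟩

end Main

/-- The ergodic constant in Case 1 equals 0 (Proposition 3.1). -/
theorem stmt5 (n : ℕ) (hn : 1 ≤ n)
(F₁ F₂ : En n → En n → ℝ) (f₁ f₂ : En n → ℝ)
    (hF₁cont : Continuous fun q : En n × En n => F₁ q.1 q.2)
    (hF₂cont : Continuous fun q : En n × En n => F₂ q.1 q.2)
    (hF₁per : ZPeriodicH F₁) (hF₂per : ZPeriodicH F₂)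
    (hF₁coer : Coercive F₁) (hF₂coer : Coercive F₂)
    (hf₁cont : Continuous f₁) (hf₂cont : Continuous f₂)
    (hf₁per : ZPeriodic f₁) (hf₂per : ZPeriodic f₂)
    -- (A2)
    (hA2 : ∀ x : En n, 0 ≤ f₁ x ∧ 0 ≤ f₂ x)
    -- (A3)
    (hA3 : ∃ x : En n, f₁ x = 0 ∧ f₂ x = 0)
    -- (A4)
    (hA4 : ∃ lam₀ : ℝ, 0 < lam₀ ∧ lam₀ < 1 ∧
      ∀ lam : ℝ, lam₀ ≤ lam → lam ≤ 1 → ∀ x : En n, ¬(f₁ x = 0 ∧ f₂ x = 0) →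
        ∀ p : En n, F₁ x (lam • p) ≤ lam * F₁ x p ∧ F₂ x (lam • p) ≤ lam * F₂ x p)
    -- (A5)
    (hA5 : (∀ (x p : En n), 0 ≤ F₁ x p ∧ 0 ≤ F₂ x p) ∧ ∀ x : En n, F₁ x 0 = 0 ∧ F₂ x 0 = 0)
    : (∃ v₁ v₂ : En n → ℝ, ZPeriodic v₁ ∧ ZPeriodic v₂ ∧
        CellSolution F₁ F₂ 1 1 v₁ v₂ f₁ f₂) ∧
      (∀ (c : ℝ) (v₁ v₂ : En n → ℝ), ZPeriodic v₁ → ZPeriodic v₂ →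
        ErgSolution (fun x p => F₁ x p - f₁ x) (fun x p => F₂ x p - f₂ x) v₁ v₂ c →
        c = 0) := by
  exact stmt5_general one_pos one_pos hF₁cont hF₂cont hF₁per hF₂per hF₁coer hF₂coer hf₁cont
    hf₂cont hf₁per hf₂per hA3 (fun x p => (hA5.1 x p).1) (fun x p => (hA5.1 x p).2)
    (fun x => (hA5.2 x).1.trans_le (hA2 x).1) (fun x => (hA5.2 x).2.trans_le (hA2 x).2)
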